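/- arXiv:1411.6354 — 2 statements merged into one kernel-verified Lean document; each statement's English description precedes it below -/
import Mathlib

section
/- Let w be a bounded weight structure on a triangulated category C. Then C_{w≤0} equals the extension-closure in C of the union ∪_{i≤0} C_{w=i}, and C_{w≥0} equals the extension-closure in C of the union ∪_{i≥0} C_{w=i}. -/
/-!
In a weight structure `C_{w≤i}` is the left orthogonal of `C_{w≥i+1}` and `C_{w≥i}` is the right
orthogonal of `C_{w≤i-1}`: if all morphisms from `M` to `C_{w≥i+1}` vanish, then so does `M ⟶ B` in
a weight decomposition `A ⟶ M ⟶ B ⟶ A[1]`, and `M` is a retract of `A`. Orthogonals are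
extension-closed, and hence contain the extension-closures of their subclasses.

Conversely, an object `M` of `C_{w≤b+1} ∩ C_{w≥a}` with `a ≤ b + 1` has a weight decomposition with
`A ∈ C_{w≤b}` and `B ∈ C_{w≥b+1}`. Since `B` is an extension of `A[1]` by `M`, and `A` is an
extension of `M` by `B[-1]`, we get `B ∈ C_{w=b+1}` and `A ∈ C_{w≥a}`. By induction on `b`, the
object `M` is an iterated extension of objects of `C_{w=i}` with `a ≤ i ≤ b + 1`.
-/

open CategoryTheory CategoryTheory.Limits CategoryTheory.Pretriangulated

namespace CWH

/-- `X` is a retract of `Y`. -/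
def IsRetract {C : Type*} [Category C] (X Y : C) : Prop :=
  ∃ (i : X ⟶ Y) (r : Y ⟶ X), i ≫ r = 𝟙 X

/-- The Karoubi-closure of a class of objects: all retracts of its objects. -/
def retractClosure {C : Type*} [Category C] (S : Set C) : Set C :=
  {X : C | ∃ Y ∈ S, IsRetract X Y}

variable (C : Type*) [Category C] [HasZeroObject C] [HasShift C ℤ]
  [Preadditive C] [∀ n : ℤ, (shiftFunctor C n).Additive] [Pretriangulated C]

/-- A weight structure on a (pre)triangulated category (homological convention):
a pair of retract-closed classes `LE = C_{w≤0}` and `GE = C_{w≥0}` such that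
`C_{w≤0} ⊆ C_{w≤0}[1]`, `C_{w≥0}[1] ⊆ C_{w≥0}`, `Hom(C_{w≤0}, C_{w≥0}[1]) = 0`,
and every object admits a weight decomposition. -/
structure WeightStructure where
  LE : Set C
  GE : Set C
  retract_LE : ∀ ⦃X Y : C⦄, IsRetract X Y → Y ∈ LE → X ∈ LE
  retract_GE : ∀ ⦃X Y : C⦄, IsRetract X Y → Y ∈ GE → X ∈ GE
  shift_LE : ∀ ⦃X : C⦄, X ∈ LE → X⟦(-1 : ℤ)⟧ ∈ LE
  shift_GE : ∀ ⦃X : C⦄, X ∈ GE → X⟦(1 : ℤ)⟧ ∈ GE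
  orthogonal : ∀ ⦃X Y : C⦄, X ∈ LE → Y ∈ GE → ∀ f : X ⟶ Y⟦(1 : ℤ)⟧, f = 0
  decomp : ∀ M : C, ∃ (X Y : C) (f : X ⟶ M) (g : M ⟶ Y) (h : Y ⟶ X⟦(1 : ℤ)⟧),
    Triangle.mk f g h ∈ (distTriang C) ∧ X ∈ LE ∧ Y⟦(-1 : ℤ)⟧ ∈ GE

variable {C}

namespace WeightStructure

variable (w : WeightStructure C)

/-- `C_{w≤i} = C_{w≤0}[i]`. -/
def le (i : ℤ) : Set C := {X : C | X⟦(-i)⟧ ∈ w.LE}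

/-- `C_{w≥i} = C_{w≥0}[i]`. -/
def ge (i : ℤ) : Set C := {X : C | X⟦(-i)⟧ ∈ w.GE}

/-- `C_{w=i} = C_{w≤i} ∩ C_{w≥i}`. -/
def eqw (i : ℤ) : Set C := w.le i ∩ w.ge i

/-- `w` is bounded if every object lies in some `C_{w≤i}` and in some `C_{w≥i}`. -/
def IsBounded : Prop := ∀ X : C, (∃ i : ℤ, X ∈ w.le i) ∧ (∃ i : ℤ, X ∈ w.ge i)

end WeightStructure

/-- The extension-closure of a class `S` of objects: the smallest class containing
the zero objects and `S` and closed under extensions (distinguished triangles). -/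
inductive ExtClosure (S : Set C) : C → Prop
  | zero (X : C) : IsZero X → ExtClosure S X
  | of (X : C) : X ∈ S → ExtClosure S X
  | ext {A E B : C} (f : A ⟶ E) (g : E ⟶ B) (h : B ⟶ A⟦(1 : ℤ)⟧) :
      Triangle.mk f g h ∈ (distTriang C) → ExtClosure S A → ExtClosure S B → ExtClosure S E

/-- The smallest full Karoubi-closed (strict) triangulated subcategory containing `S`:
closure under zero objects, shifts, cones and retracts. -/
inductive TriangClosure (S : Set C) : C → Prop
  | of (X : C) : X ∈ S → TriangClosure S X
  | zero (X : C) : IsZero X → TriangClosure S X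
  | shift (X : C) (n : ℤ) : TriangClosure S X → TriangClosure S (X⟦n⟧)
  | ext {X Y Z : C} (f : X ⟶ Y) (g : Y ⟶ Z) (h : Z ⟶ X⟦(1 : ℤ)⟧) :
      Triangle.mk f g h ∈ (distTriang C) → TriangClosure S X → TriangClosure S Y →
      TriangClosure S Z
  | retract (X Y : C) : IsRetract X Y → TriangClosure S Y → TriangClosure S X

/-- A (strict) full triangulated subcategory, given by its class of objects:
it contains the zero objects and is closed under shifts and under the
two-out-of-three property for distinguished triangles. -/
structure IsTriangulatedSub (P : Set C) : Prop where
  zero : ∀ X : C, IsZero X → X ∈ P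
  shift : ∀ X ∈ P, ∀ n : ℤ, X⟦n⟧ ∈ P
  ext₂ : ∀ ⦃X Y Z : C⦄ (f : X ⟶ Y) (g : Y ⟶ Z) (h : Z ⟶ X⟦(1 : ℤ)⟧),
    Triangle.mk f g h ∈ (distTriang C) → X ∈ P → Z ∈ P → Y ∈ P
  ext₃ : ∀ ⦃X Y Z : C⦄ (f : X ⟶ Y) (g : Y ⟶ Z) (h : Z ⟶ X⟦(1 : ℤ)⟧),
    Triangle.mk f g h ∈ (distTriang C) → X ∈ P → Y ∈ P → Z ∈ P
  ext₁ : ∀ ⦃X Y Z : C⦄ (f : X ⟶ Y) (g : Y ⟶ Z) (h : Z ⟶ X⟦(1 : ℤ)⟧),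
    Triangle.mk f g h ∈ (distTriang C) → Y ∈ P → Z ∈ P → X ∈ P

/-- A weight structure on the full (triangulated) subcategory of `C` whose objects
are given by the class `P`; retracts are taken inside `P` and the distinguished
triangles of the subcategory are the distinguished triangles of `C` with vertices
in `P`. -/
structure IsWeightStructureOn (P LEs GEs : Set C) : Prop where
  le_sub : LEs ⊆ P
  ge_sub : GEs ⊆ P
  retract_le : ∀ ⦃X Y : C⦄, X ∈ P → IsRetract X Y → Y ∈ LEs → X ∈ LEs
  retract_ge : ∀ ⦃X Y : C⦄, X ∈ P → IsRetract X Y → Y ∈ GEs → X ∈ GEs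
  shift_le : ∀ ⦃X : C⦄, X ∈ LEs → X⟦(-1 : ℤ)⟧ ∈ LEs
  shift_ge : ∀ ⦃X : C⦄, X ∈ GEs → X⟦(1 : ℤ)⟧ ∈ GEs
  orthogonal : ∀ ⦃X Y : C⦄, X ∈ LEs → Y ∈ GEs → ∀ f : X ⟶ Y⟦(1 : ℤ)⟧, f = 0
  decomp : ∀ M ∈ P, ∃ (X Y : C) (f : X ⟶ M) (g : M ⟶ Y) (h : Y ⟶ X⟦(1 : ℤ)⟧),
    Triangle.mk f g h ∈ (distTriang C) ∧ X ∈ LEs ∧ Y⟦(-1 : ℤ)⟧ ∈ GEs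

/-- The class of morphisms of `C` whose cone lies in `P`; the Verdier quotient
`C/P` is the localization of `C` at this class. -/
def coneIn (P : Set C) : MorphismProperty C := fun X Y f =>
  ∃ (Z : C) (g : Y ⟶ Z) (h : Z ⟶ X⟦(1 : ℤ)⟧),
    Triangle.mk f g h ∈ (distTriang C) ∧ Z ∈ P

/-- A weight Postnikov tower for `M`: choices of weight truncations `trunc l = w_{≤l}M`
(with cones `conePt l = w_{≥l+1}M`), of the connecting morphisms between them that are
compatible with `𝟙 M`, and of the distinguished triangles
`w_{≤l}M → w_{≤l+1}M → M^{-l-1}[l+1] → (w_{≤l}M)[1]`; the objects `termAt l = M^{-l}`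
lie in the heart and are the terms of the associated weight complex `t(M)`, whose
boundary morphisms `bd (l+1) l : M^{-l-1} → M^{-l}` are obtained by composing the
connecting morphisms of two consecutive triangles. -/
structure WeightPostnikovTower (w : WeightStructure C) (M : C) where
  trunc : ℤ → C
  trunc_mem : ∀ l : ℤ, trunc l ∈ w.le l
  ι : ∀ l : ℤ, trunc l ⟶ M
  conePt : ℤ → C
  cone_mem : ∀ l : ℤ, conePt l ∈ w.ge (l + 1)
  coneπ : ∀ l : ℤ, M ⟶ conePt l
  coneδ : ∀ l : ℤ, conePt l ⟶ (trunc l)⟦(1 : ℤ)⟧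
  trunc_dist : ∀ l : ℤ, Triangle.mk (ι l) (coneπ l) (coneδ l) ∈ (distTriang C)
  step : ∀ l : ℤ, trunc l ⟶ trunc (l + 1)
  step_ι : ∀ l : ℤ, step l ≫ ι (l + 1) = ι l
  termAt : ℤ → C
  term_mem : ∀ l : ℤ, termAt l ∈ w.LE ∧ termAt l ∈ w.GE
  sπ : ∀ l : ℤ, trunc l ⟶ (termAt l)⟦l⟧
  sδ : ∀ l : ℤ, (termAt (l + 1))⟦(l + 1 : ℤ)⟧ ⟶ (trunc l)⟦(1 : ℤ)⟧
  step_dist : ∀ l : ℤ, Triangle.mk (step l) (sπ (l + 1)) (sδ l) ∈ (distTriang C)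
  bd : ∀ i j : ℤ, termAt i ⟶ termAt j
  bd_shape : ∀ i j : ℤ, j + 1 ≠ i → bd i j = 0
  bd_eq : ∀ l : ℤ,
    (shiftFunctor C (l + 1)).map (bd (l + 1) l) ≫
      (shiftFunctorAdd' C l 1 (l + 1) rfl).hom.app (termAt l) =
    sδ l ≫ (shiftFunctor C (1 : ℤ)).map (sπ l)

/-- The differential of the weight complex associated to a weight Postnikov tower,
in "homological" indexing: the `l`-th term `termAt l` is the `(-l)`-th term `M^{-l}`
of the weight complex. -/
def towerD {w : WeightStructure C} {M : C} (T : WeightPostnikovTower w M) :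
    ∀ l : ℤ, T.termAt (l + 1) ⟶ T.termAt l :=
  fun l => T.bd (l + 1) l

section Complexes

variable {X Y : ℤ → C}

/-- A morphism of ("homologically indexed") complexes. -/
def IsChainMapDown (X Y : ℤ → C) (dX : ∀ l : ℤ, X (l + 1) ⟶ X l)
    (dY : ∀ l : ℤ, Y (l + 1) ⟶ Y l) (f : ∀ l : ℤ, X l ⟶ Y l) : Prop :=
  ∀ l : ℤ, f (l + 1) ≫ dY l = dX l ≫ f l

/-- Two families of morphisms of complexes are chain homotopic. -/
def ChainHomotopicDown (X Y : ℤ → C) (dX : ∀ l : ℤ, X (l + 1) ⟶ X l)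
    (dY : ∀ l : ℤ, Y (l + 1) ⟶ Y l) (f g : ∀ l : ℤ, X l ⟶ Y l) : Prop :=
  ∃ s : ∀ l : ℤ, X l ⟶ Y (l + 1),
    ∀ l : ℤ, f (l + 1) - g (l + 1) = s (l + 1) ≫ dY (l + 1) + dX l ≫ s l

/-- Two complexes are homotopy equivalent (i.e., isomorphic in the homotopy category). -/
def HomotopyEquivDown (X Y : ℤ → C) (dX : ∀ l : ℤ, X (l + 1) ⟶ X l)
    (dY : ∀ l : ℤ, Y (l + 1) ⟶ Y l) : Prop :=
  ∃ (f : ∀ l : ℤ, X l ⟶ Y l) (g : ∀ l : ℤ, Y l ⟶ X l),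
    IsChainMapDown X Y dX dY f ∧ IsChainMapDown Y X dY dX g ∧
    ChainHomotopicDown X X dX dX (fun l => f l ≫ g l) (fun l => 𝟙 (X l)) ∧
    ChainHomotopicDown Y Y dY dY (fun l => g l ≫ f l) (fun l => 𝟙 (Y l))

end Complexes


lemma IsRetract.of_iso {D : Type*} [Category D] {X Y : D} (e : X ≅ Y) : IsRetract X Y :=
  ⟨e.hom, e.inv, e.hom_inv_id⟩

lemma IsRetract.map {D E : Type*} [Category D] [Category E] {X Y : D} (h : IsRetract X Y)
    (F : D ⥤ E) : IsRetract (F.obj X) (F.obj Y) := by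
  obtain ⟨s, r, hsr⟩ := h
  exact ⟨F.map s, F.map r, by rw [← F.map_comp, hsr, F.map_id]⟩

lemma isRetract_obj₁_of_mor₂_eq_zero {T : Triangle C} (hT : T ∈ distTriang C) (h : T.mor₂ = 0) :
    IsRetract T.obj₂ T.obj₁ := by
  obtain ⟨s, hs⟩ := T.coyoneda_exact₂ hT (𝟙 _) (by rw [h, comp_zero])
  exact ⟨s, T.mor₁, hs.symm⟩

lemma isRetract_obj₃_of_mor₁_eq_zero {T : Triangle C} (hT : T ∈ distTriang C) (h : T.mor₁ = 0) :
    IsRetract T.obj₂ T.obj₃ := by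
  obtain ⟨r, hr⟩ := T.yoneda_exact₂ hT (𝟙 _) (by rw [h, zero_comp])
  exact ⟨T.mor₂, r, hr.symm⟩

lemma distinguished_of_iso_obj₂ {T : Triangle C} (hT : T ∈ distTriang C) {M : C} (e : T.obj₂ ≅ M) :
    Triangle.mk (T.mor₁ ≫ e.hom) (e.inv ≫ T.mor₂) T.mor₃ ∈ distTriang C := by
  have comm₁ : (T.mor₁ ≫ e.hom) ≫ e.inv = 𝟙 T.obj₁ ≫ T.mor₁ := by simp
  have comm₂ : (e.inv ≫ T.mor₂) ≫ 𝟙 T.obj₃ = e.inv ≫ T.mor₂ := by simp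
  have comm₃ : T.mor₃ ≫ (𝟙 T.obj₁)⟦(1 : ℤ)⟧' = 𝟙 T.obj₃ ≫ T.mor₃ := by simp
  exact isomorphic_distinguished _ hT _
    (Triangle.isoMk _ _ (Iso.refl T.obj₁) e.symm (Iso.refl T.obj₃) comm₁ comm₂ comm₃)

namespace ExtClosure

variable {S : Set C} {X : C}

lemma mono {S' : Set C} (hS : S ⊆ S') (hX : ExtClosure S X) : ExtClosure S' X := by
  induction hX with
  | zero X hX => exact .zero X hX
  | of X hX => exact .of X (hS hX)
  | ext f g h hT _ _ hA hB => exact .ext f g h hT hA hB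

lemma prop_of_forall_mem (P : ObjectProperty C) [P.ContainsZero] [P.IsClosedUnderIsomorphisms]
    [P.IsTriangulatedClosed₂] (hS : ∀ Y ∈ S, P Y) (hX : ExtClosure S X) : P X := by
  induction hX with
  | zero X hX => exact P.prop_of_isZero hX
  | of X hX => exact hS X hX
  | ext f g h hT _ _ hA hB => exact P.ext_of_isTriangulatedClosed₂ _ hT hA hB

end ExtClosure

namespace WeightStructure

variable (w : WeightStructure C)

lemma LE_of_iso {X Y : C} (e : X ≅ Y) (hY : Y ∈ w.LE) : X ∈ w.LE :=
  w.retract_LE (.of_iso e) hY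

lemma GE_of_iso {X Y : C} (e : X ≅ Y) (hY : Y ∈ w.GE) : X ∈ w.GE :=
  w.retract_GE (.of_iso e) hY

lemma le_zero : w.le 0 = w.LE := by
  ext X
  let e : X⟦(-0 : ℤ)⟧ ≅ X := (shiftFunctorZero' C (-0 : ℤ) neg_zero).app X
  exact ⟨w.LE_of_iso e.symm, w.LE_of_iso e⟩

lemma ge_zero : w.ge 0 = w.GE := by
  ext X
  let e : X⟦(-0 : ℤ)⟧ ≅ X := (shiftFunctorZero' C (-0 : ℤ) neg_zero).app X
  exact ⟨w.GE_of_iso e.symm, w.GE_of_iso e⟩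

lemma shift_mem_le {X : C} {i k j : ℤ} (hX : X ∈ w.le i) (hj : i + k = j) : X⟦k⟧ ∈ w.le j :=
  w.LE_of_iso ((shiftFunctorAdd' C k (-j) (-i) (by lia)).symm.app X) hX

lemma shift_mem_ge {X : C} {i k j : ℤ} (hX : X ∈ w.ge i) (hj : i + k = j) : X⟦k⟧ ∈ w.ge j :=
  w.GE_of_iso ((shiftFunctorAdd' C k (-j) (-i) (by lia)).symm.app X) hX

lemma le_monotone : Monotone w.le :=
  monotone_int_of_le_succ fun i X hX =>
    w.LE_of_iso ((shiftFunctorAdd' C (-i) (-1) (-(i + 1)) (by lia)).app X) (w.shift_LE hX)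

lemma ge_antitone : Antitone w.ge :=
  antitone_int_of_succ_le fun i X hX =>
    w.GE_of_iso ((shiftFunctorAdd' C (-(i + 1)) 1 (-i) (by lia)).app X) (w.shift_GE hX)

section Orthogonality

variable {X Y : C} {i j : ℤ}

lemma hom_eq_zero (hij : i < j) (hX : X ∈ w.le i) (hY : Y ∈ w.ge j) (f : X ⟶ Y) : f = 0 := by
  have hY' : Y⟦-(i + 1)⟧ ∈ w.GE := w.ge_antitone (Int.add_one_le_iff.2 hij) hY
  let e := (shiftFunctorAdd' C (-(i + 1)) 1 (-i) (by lia)).app Y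
  have hf : f⟦-i⟧' ≫ e.hom = 0 := w.orthogonal hX hY' _
  rwa [Preadditive.IsIso.comp_right_eq_zero, Functor.map_eq_zero_iff] at hf

lemma isZero_of_mem_le_of_mem_ge (hij : i < j) (hle : X ∈ w.le i) (hge : X ∈ w.ge j) :
    IsZero X :=
  (IsZero.iff_id_eq_zero X).2 (w.hom_eq_zero hij hle hge _)

lemma exists_distTriang (M : C) (i : ℤ) :
    ∃ T ∈ distTriang C, T.obj₂ = M ∧ T.obj₁ ∈ w.le i ∧ T.obj₃ ∈ w.ge (i + 1) := by
  obtain ⟨A, B, f, g, h, hT, hA, hB⟩ := w.decomp (M⟦-i⟧)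
  have hA' : A⟦i⟧ ∈ w.le i := w.shift_mem_le (w.le_zero ▸ hA) (zero_add i)
  have hB' : B⟦i⟧ ∈ w.ge (i + 1) := w.shift_mem_ge hB (add_comm 1 i)
  let e : M⟦-i⟧⟦i⟧ ≅ M := (shiftFunctorCompIsoId C (-i) i (neg_add_cancel i)).app M
  exact ⟨_, distinguished_of_iso_obj₂ (Triangle.shift_distinguished _ hT i) e, rfl, hA', hB'⟩

lemma mem_le_iff_leftOrthogonal :
    X ∈ w.le i ↔ ObjectProperty.leftOrthogonal (· ∈ w.ge (i + 1)) X := by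
  refine ⟨fun hX Y f hY => w.hom_eq_zero (lt_add_one i) hX hY f, fun hX => ?_⟩
  obtain ⟨T, hT, rfl, hA, hB⟩ := w.exists_distTriang X i
  exact w.retract_LE ((isRetract_obj₁_of_mor₂_eq_zero hT (hX T.mor₂ hB)).map _) hA

lemma mem_ge_iff_rightOrthogonal :
    X ∈ w.ge i ↔ ObjectProperty.rightOrthogonal (· ∈ w.le (i - 1)) X := by
  refine ⟨fun hX Y f hY => w.hom_eq_zero (sub_one_lt i) hY hX f, fun hX => ?_⟩
  obtain ⟨T, hT, rfl, hA, hB⟩ := w.exists_distTriang X (i - 1)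
  rw [sub_add_cancel] at hB
  exact w.retract_GE ((isRetract_obj₃_of_mor₁_eq_zero hT (hX T.mor₁ hA)).map _) hB

end Orthogonality

section Extensions

variable {T : Triangle C} {S : Set C} {X : C} {i : ℤ}

lemma mem_le_of_distTriang (hT : T ∈ distTriang C) (h₁ : T.obj₁ ∈ w.le i)
    (h₃ : T.obj₃ ∈ w.le i) : T.obj₂ ∈ w.le i := by
  rw [mem_le_iff_leftOrthogonal] at h₁ h₃ ⊢
  exact ObjectProperty.ext_of_isTriangulatedClosed₂ _ T hT h₁ h₃

lemma mem_ge_of_distTriang (hT : T ∈ distTriang C) (h₁ : T.obj₁ ∈ w.ge i)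
    (h₃ : T.obj₃ ∈ w.ge i) : T.obj₂ ∈ w.ge i := by
  rw [mem_ge_iff_rightOrthogonal] at h₁ h₃ ⊢
  exact ObjectProperty.ext_of_isTriangulatedClosed₂ _ T hT h₁ h₃

lemma mem_le_of_extClosure (hS : S ⊆ w.le i) (hX : ExtClosure S X) : X ∈ w.le i :=
  w.mem_le_iff_leftOrthogonal.2 <|
    hX.prop_of_forall_mem _ fun _ hY => w.mem_le_iff_leftOrthogonal.1 (hS hY)

lemma mem_ge_of_extClosure (hS : S ⊆ w.ge i) (hX : ExtClosure S X) : X ∈ w.ge i :=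
  w.mem_ge_iff_rightOrthogonal.2 <|
    hX.prop_of_forall_mem _ fun _ hY => w.mem_ge_iff_rightOrthogonal.1 (hS hY)

lemma mem_iUnion_le_of_extClosure (hS : S ⊆ ⋃ i, w.le i) (hX : ExtClosure S X) :
    X ∈ ⋃ i, w.le i := by
  induction hX with
  | zero X hX =>
    exact Set.mem_iUnion.2 ⟨0, w.mem_le_of_extClosure (Set.empty_subset _) (.zero X hX)⟩
  | of X hX => exact hS hX
  | ext f g h hT _ _ hA hB =>
    obtain ⟨a, ha⟩ := Set.mem_iUnion.1 hA
    obtain ⟨b, hb⟩ := Set.mem_iUnion.1 hB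
    exact Set.mem_iUnion.2 ⟨max a b, w.mem_le_of_distTriang hT
      (w.le_monotone (le_max_left a b) ha) (w.le_monotone (le_max_right a b) hb)⟩

lemma mem_iUnion_ge_of_extClosure (hS : S ⊆ ⋃ i, w.ge i) (hX : ExtClosure S X) :
    X ∈ ⋃ i, w.ge i := by
  induction hX with
  | zero X hX =>
    exact Set.mem_iUnion.2 ⟨0, w.mem_ge_of_extClosure (Set.empty_subset _) (.zero X hX)⟩
  | of X hX => exact hS hX
  | ext f g h hT _ _ hA hB =>
    obtain ⟨a, ha⟩ := Set.mem_iUnion.1 hA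
    obtain ⟨b, hb⟩ := Set.mem_iUnion.1 hB
    exact Set.mem_iUnion.2 ⟨min a b, w.mem_ge_of_distTriang hT
      (w.ge_antitone (min_le_left a b) ha) (w.ge_antitone (min_le_right a b) hb)⟩

end Extensions

lemma extClosure_of_mem_le_of_mem_ge {a b : ℤ} {X : C} (hle : X ∈ w.le b) (hge : X ∈ w.ge a) :
    ExtClosure (⋃ i ∈ Set.Icc a b, w.eqw i) X := by
  obtain hba | hab := lt_or_ge b a
  · exact .zero X (w.isZero_of_mem_le_of_mem_ge hba hle hge)
  induction b, hab using Int.leInduction generalizing X with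
  | base => exact .of X (Set.mem_biUnion (Set.left_mem_Icc.2 le_rfl) ⟨hle, hge⟩)
  | succ b hab ih =>
    obtain ⟨T, hT, rfl, hA, hB⟩ := w.exists_distTriang X b
    have hA_ge : T.obj₁ ∈ w.ge a :=
      w.mem_ge_of_distTriang (inv_rot_of_distTriang _ hT)
        (w.ge_antitone hab (w.shift_mem_ge hB (by lia))) hge
    have hB_le : T.obj₃ ∈ w.le (b + 1) :=
      w.mem_le_of_distTriang (rot_of_distTriang _ hT) hle (w.shift_mem_le hA rfl)
    have hA_ext : ExtClosure (⋃ i ∈ Set.Icc a (b + 1), w.eqw i) T.obj₁ :=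
      (ih hA hA_ge).mono
        (Set.biUnion_subset_biUnion_left (Set.Icc_subset_Icc_right (lt_add_one b).le))
    have hB_ext : ExtClosure (⋃ i ∈ Set.Icc a (b + 1), w.eqw i) T.obj₃ :=
      .of _ (Set.mem_biUnion (Set.right_mem_Icc.2 (hab.trans (lt_add_one b).le)) ⟨hB_le, hB⟩)
    exact .ext T.mor₁ T.mor₂ T.mor₃ hT hA_ext hB_ext

theorem le_inter_iUnion_ge_eq_extClosure (n : ℤ) :
    w.le n ∩ ⋃ i, w.ge i = {X : C | ExtClosure {Y : C | ∃ i : ℤ, i ≤ n ∧ Y ∈ w.eqw i} X} := by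
  ext X
  refine ⟨fun ⟨hle, hge⟩ => ?_, fun hX => ⟨?_, ?_⟩⟩
  · obtain ⟨a, ha⟩ := Set.mem_iUnion.1 hge
    exact (w.extClosure_of_mem_le_of_mem_ge hle ha).mono
      (Set.iUnion₂_subset fun i hi Y hY => ⟨i, hi.2, hY⟩)
  · refine w.mem_le_of_extClosure ?_ hX
    rintro Y ⟨i, hi, hY⟩
    exact w.le_monotone hi hY.1
  · refine w.mem_iUnion_ge_of_extClosure ?_ hX
    rintro Y ⟨i, -, hY⟩
    exact Set.mem_iUnion.2 ⟨i, hY.2⟩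

theorem ge_inter_iUnion_le_eq_extClosure (n : ℤ) :
    w.ge n ∩ ⋃ i, w.le i = {X : C | ExtClosure {Y : C | ∃ i : ℤ, n ≤ i ∧ Y ∈ w.eqw i} X} := by
  ext X
  refine ⟨fun ⟨hge, hle⟩ => ?_, fun hX => ⟨?_, ?_⟩⟩
  · obtain ⟨b, hb⟩ := Set.mem_iUnion.1 hle
    exact (w.extClosure_of_mem_le_of_mem_ge hb hge).mono
      (Set.iUnion₂_subset fun i hi Y hY => ⟨i, hi.1, hY⟩)
  · refine w.mem_ge_of_extClosure ?_ hX
    rintro Y ⟨i, hi, hY⟩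
    exact w.ge_antitone hi hY.2
  · refine w.mem_iUnion_le_of_extClosure ?_ hX
    rintro Y ⟨i, -, hY⟩
    exact Set.mem_iUnion.2 ⟨i, hY.1⟩

end WeightStructure

theorem statement2_general (w : WeightStructure C) (n : ℤ) :
    w.le n ∩ ⋃ i, w.ge i = {X : C | ExtClosure {Y : C | ∃ i : ℤ, i ≤ n ∧ Y ∈ w.eqw i} X} ∧
    w.ge n ∩ ⋃ i, w.le i = {X : C | ExtClosure {Y : C | ∃ i : ℤ, n ≤ i ∧ Y ∈ w.eqw i} X} :=
  ⟨w.le_inter_iUnion_ge_eq_extClosure n, w.ge_inter_iUnion_le_eq_extClosure n⟩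

/-- for a bounded weight structure, `C_{w≤0}` is the extension-closure of
`∪_{i≤0} C_{w=i}` and `C_{w≥0}` is the extension-closure of `∪_{i≥0} C_{w=i}`. -/
theorem statement2 (w : WeightStructure C) (hw : w.IsBounded) :
    w.LE = {X : C | ExtClosure {Y : C | ∃ i : ℤ, i ≤ 0 ∧ Y ∈ w.eqw i} X} ∧
    w.GE = {X : C | ExtClosure {Y : C | ∃ i : ℤ, 0 ≤ i ∧ Y ∈ w.eqw i} X} := by
  have hle : ⋃ i, w.le i = Set.univ := Set.iUnion_eq_univ_iff.2 fun X => (hw X).1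
  have hge : ⋃ i, w.ge i = Set.univ := Set.iUnion_eq_univ_iff.2 fun X => (hw X).2
  simpa only [hle, hge, Set.inter_univ, w.le_zero, w.ge_zero] using statement2_general w 0

end CWH
end

section
/- Let w be a weight structure on a triangulated category C and let D be a full triangulated subcategory of C such that w restricts to D (i.e., the pair (Obj D ∩ C_{w≤0}, Obj D ∩ C_{w≥0}) is a weight structure on D). Let l : C → C/D denote the Verdier quotient functor. Then w induces a weight structure on C/D: the Karoubi-closure in C/D of l(C_{w≤0}) and the Karoubi-closure in C/D of l(C_{w≥0}) form a weight structure on C/D. -/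
/-!
The retract and shift axioms for the induced pair are formal, and weight decompositions in the
quotient are images of those in `C`, since `L` is essentially surjective. The content is the
orthogonality axiom: if `X` is in `C_{w≤0}` and `N` receives no nonzero morphism from `C_{w≤0}`,
then every morphism `L X ⟶ L N` vanishes. It suffices to turn it into the image of a morphism of
`C` by composing it with `L t` for some `t : N ⟶ N'` inverted by `L` whose target is still
orthogonal to `C_{w≤0}`.

For a denominator `N ⟶ Z` with cone `D` in `P`, let `A ⟶ D` be a `w≤0`-truncation of `D` with `A`
in `P`. As `Hom(A, N[1]) = 0`, it lifts to a morphism `A ⟶ Z`. In a triangle `A ⟶ Z ⟶ Z'` on this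
lift, `Z ⟶ Z'` is inverted by `L` since `L A = 0`, and `Z'` is orthogonal to `C_{w≤0}`.
-/

open CategoryTheory CategoryTheory.Limits CategoryTheory.Pretriangulated

namespace CWH

variable (C : Type*) [Category C] [HasZeroObject C] [HasShift C ℤ]
  [Preadditive C] [∀ n : ℤ, (shiftFunctor C n).Additive] [Pretriangulated C]

variable {C}

section Retracts

variable {D E : Type*} [Category D] [Category E]

lemma isRetract_iff_nonempty_retract {X Y : D} : IsRetract X Y ↔ Nonempty (Retract X Y) :=
  ⟨fun ⟨i, r, h⟩ => ⟨⟨i, r, h⟩⟩, fun ⟨h⟩ => ⟨h.i, h.r, h.retract⟩⟩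

lemma mem_retractClosure_iff {S : Set D} {X : D} :
    X ∈ retractClosure S ↔ ∃ Y ∈ S, Nonempty (Retract X Y) := by
  simp only [retractClosure, isRetract_iff_nonempty_retract, Set.mem_ofPred_eq]

lemma mem_retractClosure_of_retract {S : Set D} {X Y : D} (h : Retract X Y)
    (hY : Y ∈ retractClosure S) : X ∈ retractClosure S := by
  obtain ⟨Z, hZ, ⟨h'⟩⟩ := mem_retractClosure_iff.1 hY
  exact mem_retractClosure_iff.2 ⟨Z, hZ, ⟨h.trans h'⟩⟩

lemma mem_retractClosure_of_isRetract {S : Set D} ⦃X Y : D⦄ (h : IsRetract X Y)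
    (hY : Y ∈ retractClosure S) : X ∈ retractClosure S :=
  (isRetract_iff_nonempty_retract.1 h).elim fun r => mem_retractClosure_of_retract r hY

lemma subset_retractClosure (S : Set D) : S ⊆ retractClosure S :=
  fun X hX => mem_retractClosure_iff.2 ⟨X, hX, ⟨.refl X⟩⟩

lemma hom_eq_zero_of_mem_retractClosure [HasZeroMorphisms D] {S T : Set D}
    (hST : ∀ X ∈ S, ∀ Y ∈ T, ∀ f : X ⟶ Y, f = 0) {X Y : D}
    (hX : X ∈ retractClosure S) (hY : Y ∈ retractClosure T) (f : X ⟶ Y) : f = 0 := by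
  obtain ⟨X', hX', ⟨a⟩⟩ := mem_retractClosure_iff.1 hX
  obtain ⟨Y', hY', ⟨b⟩⟩ := mem_retractClosure_iff.1 hY
  calc f = a.i ≫ (a.r ≫ f ≫ b.i) ≫ b.r := by simp
    _ = 0 := by rw [hST X' hX' Y' hY' (a.r ≫ f ≫ b.i), zero_comp, comp_zero]

variable {A : Type*} [AddMonoid A] [HasShift D A] [HasShift E A]

lemma shift_obj_mem_retractClosure (L : D ⥤ E) [L.CommShift A] {T : Set D} {n : A} {Y : D}
    (hY : Y⟦n⟧ ∈ T) : (L.obj Y)⟦n⟧ ∈ retractClosure (L.obj '' T) :=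
  mem_retractClosure_of_retract (.ofIso ((L.commShiftIso n).symm.app Y))
    (subset_retractClosure _ (Set.mem_image_of_mem L.obj hY))

lemma shift_mem_retractClosure (L : D ⥤ E) [L.CommShift A] {S T : Set D} {n : A}
    (hST : ∀ ⦃X : D⦄, X ∈ S → X⟦n⟧ ∈ T) ⦃X : E⦄ (hX : X ∈ retractClosure (L.obj '' S)) :
    X⟦n⟧ ∈ retractClosure (L.obj '' T) := by
  obtain ⟨_, ⟨Y, hY, rfl⟩, ⟨h⟩⟩ := mem_retractClosure_iff.1 hX
  exact mem_retractClosure_of_retract (h.map (shiftFunctor E n))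
    (shift_obj_mem_retractClosure L (hST hY))

end Retracts

lemma shift_mem_rightOrthogonal {D : Type*} [Category D] [HasZeroMorphisms D] {A : Type*}
    [AddGroup A] [HasShift D A] {n : A} [(shiftFunctor D (-n)).PreservesZeroMorphisms]
    {S : ObjectProperty D} (hS : ∀ ⦃X : D⦄, S X → S (X⟦-n⟧)) {N : D}
    (hN : S.rightOrthogonal N) : S.rightOrthogonal (N⟦n⟧) := by
  intro X f hX
  apply (shiftFunctor D (-n)).map_injective
  rw [← cancel_mono (shiftShiftNeg N n).hom, Functor.map_zero, zero_comp]
  exact hN _ (hS hX)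

namespace WeightStructure

lemma shift_one_mem_rightOrthogonal (w : WeightStructure C) ⦃Y : C⦄ (hY : Y ∈ w.GE) :
    ObjectProperty.rightOrthogonal (· ∈ w.LE) (Y⟦(1 : ℤ)⟧) :=
  fun _ f hX => w.orthogonal hX hY f

lemma ge_one_le_rightOrthogonal (w : WeightStructure C) :
    (· ∈ w.ge 1) ≤ ObjectProperty.rightOrthogonal (· ∈ w.LE) :=
  fun Y hY => ObjectProperty.prop_of_iso _ (shiftNegShift Y (1 : ℤ))
    (w.shift_one_mem_rightOrthogonal hY)

end WeightStructure

/-- With the octahedral axiom, which `Pretriangulated` does not include, `Z'` would simply be an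
extension of `B` by `N`. -/
lemma rightOrthogonal_cone_of_lift {S : ObjectProperty C} {N Z D A B Z' : C}
    {t : N ⟶ Z} {p : Z ⟶ D} {q : D ⟶ N⟦(1 : ℤ)⟧} (hD : Triangle.mk t p q ∈ distTriang C)
    {i : A ⟶ D} {r : D ⟶ B} {d : B ⟶ A⟦(1 : ℤ)⟧} (hB : Triangle.mk i r d ∈ distTriang C)
    {j : A ⟶ Z} {t' : Z ⟶ Z'} {e : Z' ⟶ A⟦(1 : ℤ)⟧} (hZ' : Triangle.mk j t' e ∈ distTriang C)
    (hj : j ≫ p = i) (hNS : S.rightOrthogonal N) (hBS : S.rightOrthogonal B) :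
    S.rightOrthogonal Z' := by
  intro X x hX
  have hxe : x ≫ e = 0 := by
    have hej : e ≫ j⟦(1 : ℤ)⟧' = 0 := comp_distTriang_mor_zero₃₁ _ hZ'
    obtain ⟨y : X ⟶ B, hy : x ≫ e = y ≫ d⟩ := Triangle.coyoneda_exact₁ _ hB (x ≫ e) <|
      show (x ≫ e) ≫ i⟦(1 : ℤ)⟧' = 0 by
        rw [← hj, Functor.map_comp, Category.assoc, reassoc_of% hej, zero_comp, comp_zero]
    rw [hy, hBS y hX, zero_comp]
  obtain ⟨z : X ⟶ Z, hz : x = z ≫ t'⟩ := Triangle.coyoneda_exact₃ _ hZ' x hxe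
  obtain ⟨a : X ⟶ A, ha : z ≫ p = a ≫ i⟩ := Triangle.coyoneda_exact₂ _ hB (z ≫ p) (hBS _ hX)
  have hza : z = a ≫ j := by
    obtain ⟨n : X ⟶ N, hn : z - a ≫ j = n ≫ t⟩ := Triangle.coyoneda_exact₂ _ hD (z - a ≫ j) <|
      show (z - a ≫ j) ≫ p = 0 by
        rw [Preadditive.sub_comp, ha, Category.assoc, hj, sub_self]
    rwa [hNS n hX, zero_comp, sub_eq_zero] at hn
  have hjt : j ≫ t' = 0 := comp_distTriang_mor_zero₁₂ _ hZ'
  rw [hz, hza, Category.assoc, hjt, comp_zero]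

lemma exists_coneIn_comp_eq_comp {P : Set C} {X Y Z : C} {s : X ⟶ Y} (hs : coneIn P s)
    (f : X ⟶ Z) : ∃ (W : C) (t : Z ⟶ W) (g : Y ⟶ W), coneIn P t ∧ f ≫ t = s ≫ g := by
  obtain ⟨D, a, b, hT, hD⟩ := hs
  obtain ⟨W, t, c, hT'⟩ := distinguished_cocone_triangle₂ (b ≫ f⟦(1 : ℤ)⟧')
  obtain ⟨g, hg, -⟩ := complete_distinguished_triangle_morphism₂ _ _ hT hT' f (𝟙 D)
    (Category.id_comp (b ≫ f⟦(1 : ℤ)⟧')).symm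
  exact ⟨W, t, g, ⟨D, c, _, hT', hD⟩, hg.symm⟩

section Localization

variable {E : Type*} [Category E]

open scoped ZeroObject in
lemma isZero_obj_of_mem {P : Set C} (L : C ⥤ E) [HasZeroMorphisms E]
    [L.PreservesZeroMorphisms] [L.IsLocalization (coneIn P)] {A : C} (hA : A ∈ P) :
    IsZero (L.obj A) := by
  have : IsIso (L.map (0 : (0 : C) ⟶ A)) :=
    Localization.inverts L (coneIn P) _ ⟨A, 𝟙 A, 0, contractible_distinguished₁ A, hA⟩
  exact (L.map_isZero (isZero_zero C)).of_iso (asIso (L.map (0 : (0 : C) ⟶ A))).symm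

variable [HasZeroObject E] [HasShift E ℤ] [Preadditive E]
  [∀ n : ℤ, (shiftFunctor E n).Additive] [Pretriangulated E]

lemma extensionProduct_le_inverseImage (L : C ⥤ E) [L.CommShift ℤ] [L.IsTriangulated]
    {P Q : ObjectProperty C} {P' Q' : ObjectProperty E} (hP : P ≤ P'.inverseImage L)
    (hQ : Q ≤ Q'.inverseImage L) :
    P.extensionProduct Q ≤ (P'.extensionProduct Q').inverseImage L := by
  rintro M ⟨X, Y, f, g, h, hT, hX, hY⟩
  exact ⟨L.obj X, L.obj Y, _, _, _, L.map_distinguished _ hT, hP X hX, hQ Y hY⟩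

lemma extensionProduct_of_essSurj (L : C ⥤ E) [L.CommShift ℤ] [L.IsTriangulated] [L.EssSurj]
    {P Q : ObjectProperty C} {P' Q' : ObjectProperty E} (hP : P ≤ P'.inverseImage L)
    (hQ : Q ≤ Q'.inverseImage L) (h : ∀ M, P.extensionProduct Q M) (M : E) :
    P'.extensionProduct Q' M :=
  (P'.extensionProduct Q').prop_of_iso (L.objObjPreimageIso M)
    (extensionProduct_le_inverseImage L hP hQ _ (h (L.objPreimage M)))

lemma isIso_map_mor₂_of_isZero (L : C ⥤ E) [L.CommShift ℤ] [L.IsTriangulated] {T : Triangle C}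
    (hT : T ∈ distTriang C) (h₁ : IsZero (L.obj T.obj₁)) : IsIso (L.map T.mor₂) :=
  (Triangle.isZero₁_iff_isIso₂ _ (L.map_distinguished T hT)).1 h₁

variable {P : Set C} {S : ObjectProperty C} (L : C ⥤ E) [L.CommShift ℤ] [L.IsTriangulated]
  [L.IsLocalization (coneIn P)]

lemma exists_isIso_map_rightOrthogonal (hS : ∀ ⦃X : C⦄, S X → S (X⟦(-1 : ℤ)⟧))
    (hP : (· ∈ P) ≤ ObjectProperty.extensionProduct (fun A => A ∈ P ∧ S A) S.rightOrthogonal)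
    {N Z : C} (hN : S.rightOrthogonal N) {t : N ⟶ Z} (ht : coneIn P t) :
    ∃ (Z' : C) (t' : Z ⟶ Z'), IsIso (L.map t') ∧ S.rightOrthogonal Z' := by
  obtain ⟨D, p, q, hD, hDP⟩ := ht
  obtain ⟨A, B, i, r, d, hB, ⟨hAP, hAS⟩, hBS⟩ := hP D hDP
  obtain ⟨j : A ⟶ Z, hj : i = j ≫ p⟩ :=
    Triangle.coyoneda_exact₃ _ hD i (shift_mem_rightOrthogonal hS hN _ hAS)
  obtain ⟨Z', t', e, hZ'⟩ := distinguished_cocone_triangle j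
  exact ⟨Z', t', isIso_map_mor₂_of_isZero L hZ' (isZero_obj_of_mem L hAP),
    rightOrthogonal_cone_of_lift hD hB hZ' hj.symm hN hBS⟩

/-- Without the octahedral axiom `coneIn P` need not be closed under composition, so `f` is a zigzag
rather than a single fraction; hence the induction. -/
lemma exists_comp_map_eq_map (hS : ∀ ⦃X : C⦄, S X → S (X⟦(-1 : ℤ)⟧))
    (hP : (· ∈ P) ≤ ObjectProperty.extensionProduct (fun A => A ∈ P ∧ S A) S.rightOrthogonal)
    {X N : C} (hN : S.rightOrthogonal N) (f : L.obj X ⟶ L.obj N) :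
    ∃ (N' : C) (t : N ⟶ N') (φ : X ⟶ N'),
      S.rightOrthogonal N' ∧ IsIso (L.map t) ∧ f ≫ L.map t = L.map φ := by
  refine Localization.induction_costructuredArrow L (coneIn P)
    (fun f => ∃ (N' : C) (t : N ⟶ N') (φ : f.left ⟶ N'),
      S.rightOrthogonal N' ∧ IsIso (L.map t) ∧ f.hom ≫ L.map t = L.map φ)
    ⟨N, 𝟙 N, 𝟙 N, hN, inferInstance, Category.id_comp _⟩ ?_ ?_ (CostructuredArrow.mk f)
  · rintro X₁ X₂ g f ⟨N', t, φ, hN', ht, hφ⟩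
    refine ⟨N', t, g ≫ φ, hN', ht, ?_⟩
    rw [CostructuredArrow.mk_hom_eq_self] at hφ ⊢
    rw [Category.assoc, hφ, L.map_comp]
  · rintro X₁ X₂ s hs f ⟨N', t, φ, hN', ht, hφ⟩
    rw [CostructuredArrow.mk_hom_eq_self] at hφ
    obtain ⟨W, k, g, hk, hg⟩ := exists_coneIn_comp_eq_comp hs φ
    obtain ⟨N'', u, hu, hN''⟩ := exists_isIso_map_rightOrthogonal L hS hP hN' hk
    have hkL : IsIso (L.map k) := Localization.inverts L (coneIn P) k hk
    have hgk : ((Localization.isoOfHom L (coneIn P) s hs).inv ≫ f) ≫ L.map (t ≫ k) = L.map g := by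
      rw [Category.assoc, Iso.inv_comp_eq, Localization.isoOfHom_hom, L.map_comp, reassoc_of% hφ,
        ← L.map_comp, hg, L.map_comp]
    refine ⟨N'', (t ≫ k) ≫ u, g ≫ u, hN'', ?_, ?_⟩
    · simp only [L.map_comp]
      infer_instance
    · rw [CostructuredArrow.mk_hom_eq_self, L.map_comp _ u, ← Category.assoc, hgk, ← L.map_comp]

lemma map_hom_eq_zero (hS : ∀ ⦃X : C⦄, S X → S (X⟦(-1 : ℤ)⟧))
    (hP : (· ∈ P) ≤ ObjectProperty.extensionProduct (fun A => A ∈ P ∧ S A) S.rightOrthogonal)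
    {X N : C} (hX : S X) (hN : S.rightOrthogonal N) (f : L.obj X ⟶ L.obj N) : f = 0 := by
  obtain ⟨N', t, φ, hN', _, hφ⟩ := exists_comp_map_eq_map L hS hP hN f
  rw [← cancel_mono (L.map t), hφ, hN' φ hX, L.map_zero, zero_comp]

end Localization

theorem statement9_general {E : Type*} [Category E] [HasZeroObject E] [HasShift E ℤ]
    [Preadditive E] [∀ n : ℤ, (shiftFunctor E n).Additive] [Pretriangulated E]
    (w : WeightStructure C) (P : Set C)
    (hP : (· ∈ P) ≤ ObjectProperty.extensionProduct (· ∈ P ∩ w.LE) (· ∈ w.ge 1))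
    (L : C ⥤ E) [L.CommShift ℤ] [L.IsTriangulated] [L.IsLocalization (coneIn P)] :
    ∃ w' : WeightStructure E,
      w'.LE = retractClosure (L.obj '' w.LE) ∧
      w'.GE = retractClosure (L.obj '' w.GE) := by
  have hP' := hP.trans
    (ObjectProperty.monotone_extensionProduct_right _ w.ge_one_le_rightOrthogonal)
  have := Localization.essSurj L (coneIn P)
  refine ⟨{
    LE := retractClosure (L.obj '' w.LE)
    GE := retractClosure (L.obj '' w.GE)
    retract_LE := mem_retractClosure_of_isRetract
    retract_GE := mem_retractClosure_of_isRetract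
    shift_LE := shift_mem_retractClosure L w.shift_LE
    shift_GE := shift_mem_retractClosure L w.shift_GE
    orthogonal := ?_
    decomp := extensionProduct_of_essSurj L
      (P' := (· ∈ retractClosure (L.obj '' w.LE)))
      (Q' := fun Y : E => Y⟦(-1 : ℤ)⟧ ∈ retractClosure (L.obj '' w.GE))
      (fun X hX => subset_retractClosure _ (Set.mem_image_of_mem L.obj hX))
      (fun Y hY => shift_obj_mem_retractClosure L hY) w.decomp }, rfl, rfl⟩
  intro X Y hX hY
  refine hom_eq_zero_of_mem_retractClosure ?_ hX
    (shift_mem_retractClosure L (fun _ => Set.mem_image_of_mem (shiftFunctor C (1 : ℤ)).obj) hY)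
  rintro _ ⟨X, hX, rfl⟩ _ ⟨_, ⟨Y, hY, rfl⟩, rfl⟩ f
  exact map_hom_eq_zero L w.shift_LE hP' hX (w.shift_one_mem_rightOrthogonal hY) f

/-- if `w` restricts to a full triangulated subcategory `D` (with class of
objects `P`), then `w` induces a weight structure on the Verdier quotient `C/D`
(realized as any localization `L : C ⥤ E` of `C` at the class of morphisms whose cone
lies in `P`), given by the Karoubi-closures of `L(C_{w≤0})` and of `L(C_{w≥0})`. -/
theorem statement9 {E : Type*} [Category E] [HasZeroObject E] [HasShift E ℤ]
    [Preadditive E] [∀ n : ℤ, (shiftFunctor E n).Additive] [Pretriangulated E]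
    (w : WeightStructure C) (P : Set C) (hP : IsTriangulatedSub P)
    (hres : IsWeightStructureOn P (P ∩ w.LE) (P ∩ w.GE))
    (L : C ⥤ E) [L.CommShift ℤ] [L.IsTriangulated] [L.IsLocalization (coneIn P)] :
    ∃ w' : WeightStructure E,
      w'.LE = retractClosure (L.obj '' w.LE) ∧
      w'.GE = retractClosure (L.obj '' w.GE) :=
  statement9_general w P (fun M hM => ObjectProperty.monotone_extensionProduct_right _
    (fun _ hY => hY.2) M (hres.decomp M hM)) L

end CWH
end
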